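/- Let K be a cone in a Banach space X, y ∈ X, and let D be an open bounded subset of X with y ∈ D. Suppose F : cl(D ∩ K_y) → K_y is a compact map with no fixed point on ∂(D ∩ K_y), and suppose there exists e ∈ K \ {0} such that x ≠ F(x) + σe for all x ∈ ∂(D ∩ K_y) and all σ > 0. Then the fixed point index i_{K_y}(F, D ∩ K_y) = 0. -/

import Mathlib

open Set

/-- An abstract fixed point index for compact maps on a retract `C` of a Banach
space `X`, satisfying homotopy invariance, normalization and the solution
property. -/
structure FPIndex (X : Type*) [NormedAddCommGroup X] [NormedSpace ℝ X]
    (C : Set X) where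
  ind : (X → X) → Set X → ℤ
  homotopy_invariance : ∀ (H : ℝ → X → X) (D : Set X), IsOpen D →
    Bornology.IsBounded D →
    ContinuousOn (fun p : ℝ × X => H p.1 p.2) (Icc (0:ℝ) 1 ×ˢ closure (D ∩ C)) →
    IsCompact (closure ((fun p : ℝ × X => H p.1 p.2) ''
      (Icc (0:ℝ) 1 ×ˢ closure (D ∩ C)))) →
    (∀ t ∈ Icc (0:ℝ) 1, ∀ x ∈ closure (D ∩ C), H t x ∈ C) →
    (∀ t ∈ Icc (0:ℝ) 1, ∀ x ∈ (closure (D ∩ C) ∩ C) \ (D ∩ C), H t x ≠ x) →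
    ind (H 0) D = ind (H 1) D
  normalization : ∀ (D : Set X) (z : X), IsOpen D → z ∈ D ∩ C →
    ind (fun _ => z) D = 1
  solution : ∀ (F : X → X) (D : Set X), ind F D ≠ 0 → ∃ x ∈ D ∩ C, F x = x

/-!
Push `F` along `e`: since `C + ℝ≥0 e ⊆ C` for `C = K_y`, the maps `F + σ e` form a homotopy, whose
fixed points on the relative boundary are excluded by assumption. As `D ∩ C` and the range of `F`
are bounded, `F + R e` has no fixed points at all once `R` is large, so the index vanishes by the
solution property.
-/

theorem isCompact_closure_image_prod {T X Y Z : Type*} [TopologicalSpace T] [TopologicalSpace Y]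
    [TopologicalSpace Z] [R1Space Z] {t : Set T} {s : Set X} {F : X → Y} {g : T × Y → Z}
    (ht : IsCompact t) (hF : IsCompact (closure (F '' s))) (hg : Continuous g) :
    IsCompact (closure ((fun p : T × X => g (p.1, F p.2)) '' (t ×ˢ s))) := by
  refine ((ht.prod hF).image hg).closure_of_subset ?_
  rintro _ ⟨p, hp, rfl⟩
  exact mem_image_of_mem g ⟨hp.1, subset_closure (mem_image_of_mem F hp.2)⟩

section Cone

variable {𝕜 E : Type*} [Field 𝕜] [LinearOrder 𝕜] [IsStrictOrderedRing 𝕜] [AddCommGroup E]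
  [Module 𝕜 E] {K : Set E}

theorem add_mem_of_convex_of_smul_mem (hK_convex : Convex 𝕜 K)
    (hK_scalar : ∀ x ∈ K, ∀ l : 𝕜, 0 ≤ l → l • x ∈ K) {a b : E} (ha : a ∈ K) (hb : b ∈ K) :
    a + b ∈ K := by
  have hmid : (2 : 𝕜) • midpoint 𝕜 a b ∈ K :=
    hK_scalar _ (hK_convex.midpoint_mem ha hb) 2 zero_le_two
  rwa [two_smul, midpoint_add_self] at hmid

theorem add_smul_mem_translate_cone (hK_convex : Convex 𝕜 K)
    (hK_scalar : ∀ x ∈ K, ∀ l : 𝕜, 0 ≤ l → l • x ∈ K) {y z e : E} (he : e ∈ K)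
    (hz : z ∈ (fun x => y + x) '' K) {σ : 𝕜} (hσ : 0 ≤ σ) :
    z + σ • e ∈ (fun x => y + x) '' K := by
  obtain ⟨k, hk, rfl⟩ := hz
  exact ⟨k + σ • e, add_mem_of_convex_of_smul_mem hK_convex hK_scalar hk (hK_scalar e he σ hσ),
    (add_assoc y k (σ • e)).symm⟩

end Cone

section NormedSpace

variable {X : Type*} [NormedAddCommGroup X] [NormedSpace ℝ X]

theorem tendsto_smul_const_atTop_cobounded {e : X} (he : e ≠ 0) :
    Filter.Tendsto (fun R : ℝ => R • e) Filter.atTop (Bornology.cobounded X) := by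
  rw [← tendsto_norm_atTop_iff_cobounded]
  simpa only [norm_smul] using
    tendsto_norm_atTop_atTop.atTop_mul_const (norm_pos_iff.mpr he)

open scoped Pointwise in
theorem eventually_forall_add_smul_ne {s : Set X} {F : X → X} {e : X} (he : e ≠ 0)
    (hs : Bornology.IsBounded s) (hF : Bornology.IsBounded (F '' s)) :
    ∀ᶠ R : ℝ in Filter.atTop, ∀ x ∈ s, F x + R • e ≠ x := by
  have escape : ∀ᶠ R : ℝ in Filter.atTop, R • e ∉ s - F '' s :=
    (tendsto_smul_const_atTop_cobounded he).eventually (Bornology.isBounded_def.mp (hs.sub hF))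
  filter_upwards [escape] with R hR x hx hfix
  exact hR ⟨x, hx, F x, mem_image_of_mem F hx, sub_eq_of_eq_add' hfix.symm⟩

namespace FPIndex

variable {C D : Set X} {F : X → X} {e : X}

theorem ind_eq_zero_of_forall_ne (I : FPIndex X C) (h : ∀ x ∈ D ∩ C, F x ≠ x) :
    I.ind F D = 0 := by
  by_contra hne
  obtain ⟨x, hx, hfix⟩ := I.solution F D hne
  exact h x hx hfix

theorem ind_add_smul_eq (I : FPIndex X C) (hD_open : IsOpen D) (hD_bdd : Bornology.IsBounded D)
    (hF_cont : ContinuousOn F (closure (D ∩ C)))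
    (hF_compact : IsCompact (closure (F '' closure (D ∩ C)))) {R : ℝ} (hR : 0 ≤ R)
    (hmaps : ∀ σ ∈ Icc 0 R, ∀ x ∈ closure (D ∩ C), F x + σ • e ∈ C)
    (hno : ∀ σ ∈ Icc 0 R, ∀ x ∈ (closure (D ∩ C) ∩ C) \ (D ∩ C), F x + σ • e ≠ x) :
    I.ind (fun x => F x + R • e) D = I.ind F D := by
  have mul_mem : ∀ t ∈ Icc (0 : ℝ) 1, t * R ∈ Icc 0 R := fun t ht =>
    ⟨mul_nonneg ht.1 hR, mul_le_of_le_one_left hR ht.2⟩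
  have hcont : ContinuousOn (fun p : ℝ × X => F p.2 + (p.1 * R) • e)
      (Icc 0 1 ×ˢ closure (D ∩ C)) :=
    (hF_cont.comp continuousOn_snd fun _ hp => hp.2).add (by fun_prop)
  have hcompact : IsCompact (closure ((fun p : ℝ × X => F p.2 + (p.1 * R) • e) ''
      (Icc 0 1 ×ˢ closure (D ∩ C)))) :=
    isCompact_closure_image_prod (g := fun q : ℝ × X => q.2 + (q.1 * R) • e)
      isCompact_Icc hF_compact (by fun_prop)
  have hinv := I.homotopy_invariance (fun t x => F x + (t * R) • e) D hD_open hD_bdd hcont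
    hcompact (fun t ht => hmaps _ (mul_mem t ht)) (fun t ht => hno _ (mul_mem t ht))
  simpa only [zero_mul, zero_smul, add_zero, one_mul] using hinv.symm

end FPIndex

theorem index_zero_on_translate_cone_general {C D : Set X} (hD_open : IsOpen D)
    (hD_bdd : Bornology.IsBounded D) {F : X → X} (hF_cont : ContinuousOn F (closure (D ∩ C)))
    (hF_maps : ∀ x ∈ closure (D ∩ C), F x ∈ C)
    (hF_compact : IsCompact (closure (F '' closure (D ∩ C)))) {e : X} (he : e ≠ 0)
    (hCe : ∀ z ∈ C, ∀ σ : ℝ, 0 ≤ σ → z + σ • e ∈ C)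
    (hno : ∀ x ∈ (closure (D ∩ C) ∩ C) \ (D ∩ C), ∀ σ : ℝ, 0 ≤ σ → F x + σ • e ≠ x)
    (I : FPIndex X C) :
    I.ind F D = 0 := by
  have hrange : Bornology.IsBounded (F '' (D ∩ C)) :=
    hF_compact.isBounded.subset ((image_mono subset_closure).trans subset_closure)
  obtain ⟨R, hR, hR_nonneg⟩ :=
    ((eventually_forall_add_smul_ne he (hD_bdd.subset inter_subset_left) hrange).and
      (Filter.eventually_ge_atTop 0)).exists
  calc I.ind F D
      = I.ind (fun x => F x + R • e) D :=
        (I.ind_add_smul_eq hD_open hD_bdd hF_cont hF_compact hR_nonneg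
          (fun σ hσ x hx => hCe _ (hF_maps x hx) σ hσ.1) (fun σ hσ x hx => hno x hx σ hσ.1)).symm
    _ = 0 := I.ind_eq_zero_of_forall_ne hR

end NormedSpace

/-- Lemma 2.1(1): if there is `e ∈ K \ {0}` with `x ≠ F x + σ e` on the relative
boundary of `D ∩ K_y`, then the fixed point index of `F` on `D ∩ K_y` is `0`. -/
theorem index_zero_on_translate_cone
    {X : Type*} [NormedAddCommGroup X] [NormedSpace ℝ X] [CompleteSpace X]
    (K : Set X) (hK_closed : IsClosed K) (hK_convex : Convex ℝ K)
    (hK_scalar : ∀ x ∈ K, ∀ l : ℝ, 0 ≤ l → l • x ∈ K)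
    (hK_pointed : K ∩ (-K) = {0})
    (y : X) (Ky : Set X) (hKy : Ky = (fun x => y + x) '' K)
    (D : Set X) (hD_open : IsOpen D) (hD_bdd : Bornology.IsBounded D)
    (hyD : y ∈ D)
    (F : X → X) (hF_cont : ContinuousOn F (closure (D ∩ Ky)))
    (hF_maps : ∀ x ∈ closure (D ∩ Ky), F x ∈ Ky)
    (hF_compact : IsCompact (closure (F '' closure (D ∩ Ky))))
    (hF_nofix : ∀ x ∈ (closure (D ∩ Ky) ∩ Ky) \ (D ∩ Ky), F x ≠ x)
    (e : X) (he : e ∈ K) (he0 : e ≠ 0)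
    (hno : ∀ x ∈ (closure (D ∩ Ky) ∩ Ky) \ (D ∩ Ky), ∀ σ : ℝ, 0 < σ →
      x ≠ F x + σ • e)
    (I : FPIndex X Ky) :
    I.ind F D = 0 := by
  subst hKy
  refine index_zero_on_translate_cone_general hD_open hD_bdd hF_cont hF_maps hF_compact he0
    (fun z hz σ hσ => add_smul_mem_translate_cone hK_convex hK_scalar he hz hσ) ?_ I
  intro x hx σ hσ
  rcases hσ.eq_or_lt with rfl | hσ_pos
  · simpa only [zero_smul, add_zero] using hF_nofix x hx
  · exact (hno x hx σ hσ_pos).symm
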